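/- (Lemma 5.1(i), variance sandwich.) Let 0 < β_i ≤ 2 for i = 1,…,d, L > 0, p ∈ 𝒫_d(β,L) and t ∈ ℝ^d. Set c₈(β,L) := min_{i=1,…,d} ( 2dL ∫ |x_i|^{β_i} K²(x) dλ^d(x) / ‖K‖₂² )^{−1/β_i}. Then for every bandwidth h = (h_1,…,h_d) with 0 < h_i ≤ c₈(β,L) p(t)^{1/β_i} for all i: (1/2) ‖K‖₂² p(t) / (n ∏_{i=1}^d h_i) ≤ n^{−1} ((K_h)² ∗ p)(t) ≤ (3/2) ‖K‖₂² p(t) / (n ∏_{i=1}^d h_i). -/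

import Mathlib

open MeasureTheory Real
open scoped ENNReal BigOperators

noncomputable section

/-- `Vec d` is `ℝ^d` (with the product structure, used for anisotropic statements). -/
abbrev Vec (d : ℕ) := Fin d → ℝ

/-- Samples of size `n` from `ℝ^d`. -/
abbrev Sample (d n : ℕ) := Fin n → Vec d

/-- The largest integer strictly smaller than `b` (for `b > 0`), i.e. `⌊b⌋` in the paper's
anisotropic Hölder class notation. -/
def hfl (b : ℝ) : ℕ := ⌈b⌉₊ - 1

/-- One-dimensional Taylor polynomial of `f` at `y'` of degree `l`, evaluated at `y`. -/
def taylorPoly (f : ℝ → ℝ) (l : ℕ) (y' y : ℝ) : ℝ :=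
  ∑ k ∈ Finset.range (l + 1), iteratedDeriv k f y' / (Nat.factorial k : ℝ) * (y - y') ^ k

/-- The slice of `f : ℝ^d → ℝ` along coordinate `i` through the point `x`. -/
def sliceFun {d : ℕ} (f : Vec d → ℝ) (i : Fin d) (x : Vec d) : ℝ → ℝ :=
  fun y => f (Function.update x i y)

/-- Anisotropic Hölder condition with exponents `β = (β_1, …, β_d)` and constant `L`:
in each coordinate `i`, the slices admit derivatives up to order `⌊β i⌋` (the largest
integer strictly less than `β i`) and the Taylor remainder of degree `⌊β i⌋` is bounded
by `L |y - y'| ^ (β i)`, uniformly in the remaining coordinates. For `β i ≤ 1` this is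
the usual coordinatewise Hölder condition. -/
def HolderAniso (d : ℕ) (β : Vec d) (L : ℝ) (f : Vec d → ℝ) : Prop :=
  ∀ i : Fin d,
    (∀ x : Vec d, ContDiff ℝ (hfl (β i)) (sliceFun f i x)) ∧
    ∀ (x : Vec d) (y y' : ℝ),
      |sliceFun f i x y - taylorPoly (sliceFun f i x) (hfl (β i)) y' y| ≤ L * |y - y'| ^ (β i)

/-- `p` is a probability density on `ℝ^d` (w.r.t. Lebesgue measure). -/
def IsProbDensity (d : ℕ) (p : Vec d → ℝ) : Prop :=
  Measurable p ∧ (∀ x, 0 ≤ p x) ∧ ∫ x, p x = 1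

/-- The class `𝒫_d(β, L)` of anisotropic Hölder-smooth probability densities. -/
def Pclass (d : ℕ) (β : Vec d) (L : ℝ) (p : Vec d → ℝ) : Prop :=
  IsProbDensity d p ∧ HolderAniso d β L p

/-- The unnormalized harmonic mean `β̄ = (∑ 1/β_i)⁻¹`. -/
def betaBar {d : ℕ} (β : Vec d) : ℝ := (∑ i, (β i)⁻¹)⁻¹

/-- `c₁(β, L) = sup { ‖p‖_∞ : p ∈ 𝒫_d(β, L) }`. -/
def c1const (d : ℕ) (β : Vec d) (L : ℝ) : ℝ :=
  sSup {c | ∃ p x, Pclass d β L p ∧ c = p x}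

/-- The measure on `ℝ^d` with Lebesgue density `p`. -/
def pdfMeasure (d : ℕ) (p : Vec d → ℝ) : Measure (Vec d) :=
  volume.withDensity fun x => ENNReal.ofReal (p x)

/-- The joint law `P^{⊗n}` of an i.i.d. sample of size `n` from the density `p`. -/
def jointMeasure (d n : ℕ) (p : Vec d → ℝ) : Measure (Sample d n) :=
  Measure.pi fun _ => pdfMeasure d p

/-- The `p`-dependent rate `ψ^n_{x,β} = min{ x, (x/n)^{β̄/(2β̄+1)} }` (with `bb = β̄`). -/
def psiRate (n : ℕ) (bb x : ℝ) : ℝ := min x ((x / n) ^ (bb / (2 * bb + 1)))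

end

noncomputable section

/-- `K` is a product kernel `K(x) = ∏ K_i(x_i)` whose factors are nonnegative, symmetric,
supported on `[-1,1]`, continuous on their support, integrate to one and are positive at `0`. -/
def IsProductKernel (d : ℕ) (K : Vec d → ℝ) : Prop :=
  ∃ Ki : Fin d → (ℝ → ℝ),
    (∀ x, K x = ∏ i, Ki i (x i)) ∧
    ∀ i : Fin d,
      (∀ y, 0 ≤ Ki i y) ∧ (∀ y, Ki i (-y) = Ki i y) ∧
      (∀ y, y ∉ Set.Icc (-1 : ℝ) 1 → Ki i y = 0) ∧
      ContinuousOn (Ki i) (Set.Icc (-1) 1) ∧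
      (∫ y, Ki i y = 1) ∧ 0 < Ki i 0

/-- The rescaled kernel `K_h(x) = (∏ h_i)⁻¹ K(x_1/h_1, …, x_d/h_d)`. -/
def scaledKernel (d : ℕ) (K : Vec d → ℝ) (h : Vec d) (x : Vec d) : ℝ :=
  (∏ i, h i)⁻¹ * K (fun i => x i / h i)

/-- The kernel density estimator `p̂_{n,h}(t) = n⁻¹ ∑_i K_h(t - X_i)`. -/
def kde (d n : ℕ) (K : Vec d → ℝ) (h : Vec d) (X : Sample d n) (t : Vec d) : ℝ :=
  (n : ℝ)⁻¹ * ∑ i, scaledKernel d K h (fun j => t j - X i j)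

/-- `‖K‖_sup`. -/
def KsupNorm (d : ℕ) (K : Vec d → ℝ) : ℝ := ⨆ x, |K x|

/-- `‖K‖₂² = ∫ K² dλ^d`. -/
def K2sq (d : ℕ) (K : Vec d → ℝ) : ℝ := ∫ x, (K x) ^ 2

/-- The exact variance proxy `σ_t²(h) = n⁻¹ ((K_h)² ∗ p)(t)`. -/
def sigmaSq (d n : ℕ) (K : Vec d → ℝ) (p : Vec d → ℝ) (h : Vec d) (t : Vec d) : ℝ :=
  (n : ℝ)⁻¹ * ∫ y, (scaledKernel d K h (fun i => t i - y i)) ^ 2 * p y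

/-- The truncation level `log²n / (n² ∏ h_i²)`. -/
def truncLevel (d n : ℕ) (h : Vec d) : ℝ :=
  (Real.log n) ^ 2 / ((n : ℝ) ^ 2 * (∏ i, h i) ^ 2)

/-- `σ²_{t,trunc}(h) = max{ log²n/(n² ∏ h_i²), σ_t²(h) }`. -/
def sigmaSqTrunc (d n : ℕ) (K : Vec d → ℝ) (p : Vec d → ℝ) (h : Vec d) (t : Vec d) : ℝ :=
  max (truncLevel d n h) (sigmaSq d n K p h t)

/-- The empirical variance `σ̃_t²(h) = (n² ∏ h_i²)⁻¹ ∑_i K²((t - X_i)/h)`. -/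
def sigmaTildeSq (d n : ℕ) (K : Vec d → ℝ) (h : Vec d) (X : Sample d n) (t : Vec d) : ℝ :=
  ((n : ℝ) ^ 2 * (∏ i, h i) ^ 2)⁻¹ * ∑ i, (K (fun j => (t j - X i j) / h j)) ^ 2

/-- `σ̃²_{t,trunc}(h) = max{ log²n/(n² ∏ h_i²), σ̃_t²(h) }`. -/
def sigmaTildeSqTrunc (d n : ℕ) (K : Vec d → ℝ) (h : Vec d) (X : Sample d n) (t : Vec d) : ℝ :=
  max (truncLevel d n h) (sigmaTildeSq d n K h X t)

/-- Membership of the multi-index `j` in the dyadic grid `𝒥`, i.e. `∑ j_i ≤ ⌊log₂(n/log²n)⌋`. -/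
def gridOK (d n : ℕ) (j : Fin d → ℕ) : Prop :=
  ((∑ i, j i : ℕ) : ℝ) ≤ Real.logb 2 ((n : ℝ) / (Real.log n) ^ 2)

/-- The bandwidth `(2^{-j_1}, …, 2^{-j_d})` associated with a multi-index `j`. -/
def bwOf (d : ℕ) (j : Fin d → ℕ) : Vec d := fun i => (2 : ℝ) ^ (-(j i : ℝ))

/-- The bias upper bound `B_t(h) = L ∑_i c_{9,i}(β) h_i^{β_i}`,
with `c_{9,i}(β) = ∫ |x_i|^{β_i} |K(x)| dλ^d(x)`. -/
def biasBound (d : ℕ) (K : Vec d → ℝ) (β : Vec d) (L : ℝ) (h : Vec d) : ℝ :=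
  L * ∑ i, (∫ x : Vec d, |x i| ^ (β i) * |K x|) * h i ^ (β i)

/-- The bias `b_t(h) = p(t) - (K_h ∗ p)(t)`. -/
def biasAt (d : ℕ) (K : Vec d → ℝ) (p : Vec d → ℝ) (h : Vec d) (t : Vec d) : ℝ :=
  p t - ∫ y, scaledKernel d K h (fun i => t i - y i) * p y

end

noncomputable section
/-- The constant `c₈(β,L) = min_i ( 2dL ∫ |x_i|^{β_i} K²(x) dλ^d(x) / ‖K‖₂² )^{-1/β_i}`. -/
def c8const (d : ℕ) (K : Vec d → ℝ) (β : Vec d) (L : ℝ) : ℝ :=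
  ⨅ i : Fin d,
    (2 * d * L * (∫ x : Vec d, |x i| ^ (β i) * (K x) ^ 2) / K2sq d K) ^ (-(β i)⁻¹)
end

/-- A Hölder condition of order at most two bounds the symmetric second differences. -/
lemma HolderAniso.abs_second_difference_le {d : ℕ} {β : Vec d} {L : ℝ} {p : Vec d → ℝ}
    (hp : HolderAniso d β L p) {i : Fin d} (hi : β i ≤ 2) (x : Vec d) (y s : ℝ) :
    |p (Function.update x i (y + s)) + p (Function.update x i (y - s))
      - 2 * p (Function.update x i y)| ≤ 2 * L * |s| ^ β i := by
  have hplus := (hp i).2 x (y + s) y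
  have hminus := (hp i).2 x (y - s) y
  have hceil : ⌈β i⌉₊ ≤ 2 := Nat.ceil_le.2 (by exact_mod_cast hi)
  have hdegree : hfl (β i) = 0 ∨ hfl (β i) = 1 := by unfold hfl; omega
  have hsum : taylorPoly (sliceFun p i x) (hfl (β i)) y (y + s)
      + taylorPoly (sliceFun p i x) (hfl (β i)) y (y - s) = 2 * sliceFun p i x y := by
    rcases hdegree with h | h <;> rw [h] <;>
      simp [taylorPoly, Finset.sum_range_succ] <;> ring
  rw [add_sub_cancel_left] at hplus
  rw [show y - s - y = -s by ring, abs_neg] at hminus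
  change |sliceFun p i x (y + s) + sliceFun p i x (y - s) - 2 * sliceFun p i x y| ≤ _
  rw [abs_le] at *
  constructor <;> linarith [hplus.1, hplus.2, hminus.1, hminus.2]

/-- A measurable function supported in the cube `[-1, 1]^d` and bounded there is integrable. -/
lemma integrable_of_bounded_on_cube {d : ℕ} {f : Vec d → ℝ} (hf : Measurable f) (C : ℝ)
    (hzero : ∀ u, u ∉ Set.Icc (-1 : Vec d) 1 → f u = 0)
    (hbound : ∀ u ∈ Set.Icc (-1 : Vec d) 1, |f u| ≤ C) : Integrable f := by
  rw [← integrableOn_iff_integrable_of_support_subset (s := Set.Icc (-1 : Vec d) 1)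
    (fun u hu => by by_contra h; exact hu (hzero u h))]
  refine Measure.integrableOn_of_bounded (M := C) isCompact_Icc.measure_lt_top.ne
    hf.aestronglyMeasurable ?_
  filter_upwards [ae_restrict_mem measurableSet_Icc] with u hu using hbound u hu

/-- The reflection of one coordinate preserves Lebesgue measure. -/
lemma measurePreserving_update_neg {d : ℕ} (k : Fin d) :
    MeasurePreserving (fun u : Vec d => Function.update u k (-u k)) := by
  have h := volume_preserving_pi (ι := Fin d) (α' := fun _ => ℝ) (β' := fun _ => ℝ)
    (f := fun i => if i = k then fun y : ℝ => -y else id) (fun i => by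
      split_ifs
      · exact Measure.measurePreserving_neg volume
      · exact MeasurePreserving.id volume)
  convert h using 1
  ext u i
  by_cases hi : i = k
  · subst hi; simp
  · simp [hi]

/-- The properties of a squared product kernel used for the variance expansion. -/
structure IsEvenCubeWeight {d : ℕ} (w : Vec d → ℝ) : Prop where
  measurable : Measurable w
  nonneg : ∀ u, 0 ≤ w u
  even : ∀ k u, w (Function.update u k (-u k)) = w u
  zero_off_cube : ∀ u, u ∉ Set.Icc (-1 : Vec d) 1 → w u = 0
  bounded : ∃ C, ∀ u, w u ≤ C

lemma IsProductKernel.isEvenCubeWeight_sq {d : ℕ} {K : Vec d → ℝ} (hK : IsProductKernel d K) :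
    IsEvenCubeWeight (fun u => K u ^ 2) := by
  obtain ⟨Ki, hprod, hKi⟩ := hK
  have hmeas : ∀ i, Measurable (Ki i) := fun i => by
    have hind : Ki i = (Set.Icc (-1 : ℝ) 1).piecewise (Ki i) 0 := by
      ext y
      by_cases hy : y ∈ Set.Icc (-1 : ℝ) 1
      · simp [Set.piecewise, hy]
      · rw [Set.piecewise_eq_of_notMem _ _ _ hy, (hKi i).2.2.1 y hy, Pi.zero_apply]
    rw [hind]
    exact (hKi i).2.2.2.1.measurable_piecewise continuousOn_const measurableSet_Icc
  have hbdd : ∀ i, ∃ C, ∀ y, Ki i y ≤ C := fun i => by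
    obtain ⟨C, hC⟩ := isCompact_Icc.exists_bound_of_continuousOn (hKi i).2.2.2.1
    refine ⟨max C 0, fun y => ?_⟩
    by_cases hy : y ∈ Set.Icc (-1 : ℝ) 1
    · exact (le_abs_self _).trans ((hC y hy).trans (le_max_left _ _))
    · rw [(hKi i).2.2.1 y hy]; exact le_max_right _ _
  choose C hC using hbdd
  have hKeq : K = fun u => ∏ i, Ki i (u i) := funext hprod
  refine ⟨?_, fun u => sq_nonneg _, fun k u => ?_, fun u hu => ?_, (∏ i, C i) ^ 2, fun u => ?_⟩
  · rw [hKeq]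
    exact (Finset.measurable_prod _ fun i _ => (hmeas i).comp (measurable_pi_apply i)).pow_const 2
  · simp only [hprod]
    congr 1
    refine Finset.prod_congr rfl fun i _ => ?_
    by_cases hi : i = k
    · subst hi; simpa using (hKi i).2.1 (u i)
    · simp [hi]
  · have : ∃ i, u i ∉ Set.Icc (-1 : ℝ) 1 := by
      by_contra! h
      exact hu ⟨fun i => (h i).1, fun i => (h i).2⟩
    obtain ⟨i, hi⟩ := this
    simp only [hprod]
    rw [Finset.prod_eq_zero (Finset.mem_univ i) ((hKi i).2.2.1 _ hi), zero_pow two_ne_zero]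
  · simp only [hprod]
    exact pow_le_pow_left₀ (Finset.prod_nonneg fun i _ => (hKi i).1 _)
      (Finset.prod_le_prod (fun i _ => (hKi i).1 _) fun i _ => hC i _) 2

lemma IsEvenCubeWeight.integrable_mul {d : ℕ} {w : Vec d → ℝ} (hw : IsEvenCubeWeight w)
    {g : Vec d → ℝ} (hg : Measurable g) {C : ℝ} (hC : ∀ u ∈ Set.Icc (-1 : Vec d) 1, |g u| ≤ C) :
    Integrable (fun u => w u * g u) := by
  obtain ⟨B, hB⟩ := hw.bounded
  refine integrable_of_bounded_on_cube (hw.measurable.mul hg) (B * C)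
    (fun u hu => by rw [hw.zero_off_cube u hu, zero_mul]) fun u hu => ?_
  rw [abs_mul, abs_of_nonneg (hw.nonneg u)]
  exact mul_le_mul (hB u) (hC u hu) (abs_nonneg _) ((hw.nonneg u).trans (hB u))

/-- Moves the coordinates in `s` of `t` by `-h u`. -/
def partialShift {d : ℕ} (t h : Vec d) (s : Finset (Fin d)) (u : Vec d) : Vec d :=
  fun i => if i ∈ s then t i - h i * u i else t i

lemma measurable_partialShift {d : ℕ} (t h : Vec d) (s : Finset (Fin d)) :
    Measurable (partialShift t h s) := by
  refine measurable_pi_lambda _ fun i => ?_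
  unfold partialShift
  split_ifs <;> fun_prop

lemma partialShift_insert {d : ℕ} (t h : Vec d) {s : Finset (Fin d)} (k : Fin d) (u : Vec d) :
    partialShift t h (insert k s) u
      = Function.update (partialShift t h s u) k (t k - h k * u k) := by
  ext i
  by_cases hi : i = k
  · subst hi; simp [partialShift]
  · simp [partialShift, hi]

lemma partialShift_insert_update_neg {d : ℕ} (t h : Vec d) {s : Finset (Fin d)} {k : Fin d}
    (u : Vec d) :
    partialShift t h (insert k s) (Function.update u k (-u k))
      = Function.update (partialShift t h s u) k (t k + h k * u k) := by
  ext i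
  by_cases hi : i = k
  · subst hi; simp [partialShift]
  · simp [partialShift, hi]

lemma update_partialShift_of_notMem {d : ℕ} (t h : Vec d) {s : Finset (Fin d)} {k : Fin d}
    (hk : k ∉ s) (u : Vec d) :
    Function.update (partialShift t h s u) k (t k) = partialShift t h s u := by
  rw [Function.update_eq_self_iff]
  simp [partialShift, hk]

lemma partialShift_empty {d : ℕ} (t h u : Vec d) : partialShift t h ∅ u = t := by
  ext i; simp [partialShift]

lemma partialShift_univ {d : ℕ} (t h u : Vec d) :
    partialShift t h Finset.univ u = fun i => t i - h i * u i := by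
  ext i; simp [partialShift]

/-- Adding one coordinate to a partial shift changes the symmetrized value by a Hölder term. -/
lemma HolderAniso.abs_partialShift_insert_le {d : ℕ} {β : Vec d} {L : ℝ} {p : Vec d → ℝ}
    (hp : HolderAniso d β L p) (t h : Vec d) (hh : ∀ i, 0 < h i) {s : Finset (Fin d)} {k : Fin d}
    (hβ : β k ≤ 2) (hk : k ∉ s) (u : Vec d) :
    |p (partialShift t h (insert k s) u)
        + p (partialShift t h (insert k s) (Function.update u k (-u k)))
        - 2 * p (partialShift t h s u)| ≤ 2 * (L * h k ^ β k) * |u k| ^ β k := by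
  have h2 := hp.abs_second_difference_le hβ (partialShift t h s u) (t k) (h k * u k)
  rw [update_partialShift_of_notMem t h hk, ← partialShift_insert,
    ← partialShift_insert_update_neg, abs_mul, abs_of_pos (hh k),
    Real.mul_rpow (hh k).le (abs_nonneg _)] at h2
  rw [abs_le] at *
  constructor <;> linarith [h2.1, h2.2]

lemma abs_apply_rpow_le_one {d : ℕ} {u : Vec d} (hu : u ∈ Set.Icc (-1 : Vec d) 1) (k : Fin d)
    {b : ℝ} (hb : 0 ≤ b) : |u k| ^ b ≤ 1 :=
  Real.rpow_le_one (abs_nonneg _) (abs_le.2 ⟨hu.1 k, hu.2 k⟩) hb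

lemma HolderAniso.exists_partialShift_le {d : ℕ} {β : Vec d} {L : ℝ} {p : Vec d → ℝ}
    (hp : HolderAniso d β L p) (hpos : ∀ x, 0 ≤ p x) (hL : 0 < L) (hβ : ∀ i, 0 < β i ∧ β i ≤ 2)
    (t h : Vec d) (hh : ∀ i, 0 < h i) (s : Finset (Fin d)) :
    ∃ C, ∀ u ∈ Set.Icc (-1 : Vec d) 1, p (partialShift t h s u) ≤ C := by
  induction s using Finset.induction_on with
  | empty => exact ⟨p t, fun u _ => by rw [partialShift_empty]⟩
  | insert k s hk ih =>
    obtain ⟨C, hC⟩ := ih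
    refine ⟨2 * C + 2 * (L * h k ^ β k), fun u hu => ?_⟩
    have h2 := (abs_le.1 (hp.abs_partialShift_insert_le t h hh (hβ k).2 hk u)).2
    have h3 : 2 * (L * h k ^ β k) * |u k| ^ β k ≤ 2 * (L * h k ^ β k) :=
      mul_le_of_le_one_right
        (mul_nonneg zero_le_two (mul_nonneg hL.le (Real.rpow_nonneg (hh k).le _)))
        (abs_apply_rpow_le_one hu k (hβ k).1.le)
    linarith [hC u hu, hpos (partialShift t h (insert k s) (Function.update u k (-u k)))]

/-- The bias of smoothing `p` with an even weight along the coordinates in `s`. -/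
lemma abs_integral_weight_partialShift_sub_le {d : ℕ} {w : Vec d → ℝ} (hw : IsEvenCubeWeight w)
    {β : Vec d} {L : ℝ} {p : Vec d → ℝ} (hp : HolderAniso d β L p) (hmeas : Measurable p)
    (hpos : ∀ x, 0 ≤ p x) (hL : 0 < L) (hβ : ∀ i, 0 < β i ∧ β i ≤ 2)
    (t h : Vec d) (hh : ∀ i, 0 < h i) (s : Finset (Fin d)) :
    |(∫ u, w u * p (partialShift t h s u)) - (∫ u, w u) * p t|
      ≤ ∑ i ∈ s, L * h i ^ β i * ∫ u, |u i| ^ β i * w u := by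
  have hint : ∀ s, Integrable (fun u => w u * p (partialShift t h s u)) := fun s => by
    obtain ⟨C, hC⟩ := hp.exists_partialShift_le hpos hL hβ t h hh s
    exact hw.integrable_mul (hmeas.comp (measurable_partialShift t h s))
      fun u hu => (abs_of_nonneg (hpos _)).trans_le (hC u hu)
  induction s using Finset.induction_on with
  | empty => simp [partialShift_empty, integral_mul_const]
  | insert k s hk ih =>
    have hmp := measurePreserving_update_neg k
    let F : Vec d → ℝ := fun u => w u * p (partialShift t h (insert k s) u)
    have hF : Measurable F :=
      hw.measurable.mul (hmeas.comp (measurable_partialShift t h (insert k s)))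
    have hreflect : ∫ u, F (Function.update u k (-u k)) = ∫ u, F u := by
      conv_rhs => rw [← hmp.map_eq]
      exact (integral_map hmp.aemeasurable hF.aestronglyMeasurable).symm
    have hFint : Integrable F := hint (insert k s)
    have hFint' : Integrable (fun u => F (Function.update u k (-u k))) :=
      hmp.integrable_comp_of_integrable hFint
    have hmoment : Integrable (fun u => |u k| ^ β k * w u) := by
      have := hw.integrable_mul (g := fun u => |u k| ^ β k) (by fun_prop) (C := 1)
        fun u hu => by
          rw [abs_of_nonneg (Real.rpow_nonneg (abs_nonneg _) _)]
          exact abs_apply_rpow_le_one hu k (hβ k).1.le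
      simpa only [mul_comm] using this
    have hstep : |(∫ u, F u) - ∫ u, w u * p (partialShift t h s u)|
        ≤ L * h k ^ β k * ∫ u, |u k| ^ β k * w u := by
      have hdouble : 2 * ((∫ u, F u) - ∫ u, w u * p (partialShift t h s u))
          = ∫ u, (F u + F (Function.update u k (-u k))
            - 2 * (w u * p (partialShift t h s u))) := by
        rw [integral_sub (hFint.fun_add hFint') ((hint s).const_mul 2),
          integral_add hFint hFint', hreflect, integral_const_mul]
        ring
      have hle : |2 * ((∫ u, F u) - ∫ u, w u * p (partialShift t h s u))|
          ≤ ∫ u, 2 * (L * h k ^ β k) * (|u k| ^ β k * w u) := by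
        rw [hdouble, ← Real.norm_eq_abs]
        refine norm_integral_le_of_norm_le (hmoment.const_mul _) (ae_of_all _ fun u => ?_)
        have h2 := mul_le_mul_of_nonneg_left
          (hp.abs_partialShift_insert_le t h hh (hβ k).2 hk u) (hw.nonneg u)
        rw [Real.norm_eq_abs]
        calc _ = |w u * (p (partialShift t h (insert k s) u)
              + p (partialShift t h (insert k s) (Function.update u k (-u k)))
              - 2 * p (partialShift t h s u))| := by
                simp only [F, hw.even k u]; congr 1; ring
          _ ≤ w u * (2 * (L * h k ^ β k) * |u k| ^ β k) := by
                rwa [abs_mul, abs_of_nonneg (hw.nonneg u)]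
          _ = _ := by ring
      rw [integral_const_mul, abs_mul, abs_two] at hle
      linarith
    rw [Finset.sum_insert hk]
    exact (abs_sub_le _ _ _).trans (add_le_add hstep ih)

/-- Change of variables `y = t - h u` in a Lebesgue integral over `ℝ^d`. -/
lemma integral_eq_prod_mul_integral_sub_mul {d : ℕ} {h : Vec d} (hh : ∀ i, 0 < h i) (t : Vec d)
    {F : Vec d → ℝ} (hF : Measurable F) :
    ∫ y, F y = (∏ i, h i) * ∫ u : Vec d, F (fun i => t i - h i * u i) := by
  have hprod : 0 < ∏ i, h i := Finset.prod_pos fun i _ => hh i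
  have hdet : (Matrix.diagonal h).det ≠ 0 := by rw [Matrix.det_diagonal]; exact hprod.ne'
  have hvol := Real.smul_map_diagonal_volume_pi hdet
  have hlin : Measurable (Matrix.toLin' (Matrix.diagonal h)) :=
    (LinearMap.continuous_of_finiteDimensional _).measurable
  have hG : Measurable fun v => F (t - v) := hF.comp (measurable_const.sub measurable_id)
  rw [← integral_sub_left_eq_self F volume t]
  conv_lhs => rw [← hvol]
  rw [integral_smul_measure, integral_map hlin.aemeasurable hG.aestronglyMeasurable,
    Matrix.det_diagonal, abs_of_pos hprod, ENNReal.toReal_ofReal hprod.le, smul_eq_mul]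
  congr 2
  ext u
  congr 1
  ext i
  simp [Matrix.mulVec_diagonal]

/-- The convolution of the squared rescaled kernel with `p`, in rescaled coordinates. -/
lemma sigmaSq_eq {d n : ℕ} {K : Vec d → ℝ} (hK : IsEvenCubeWeight fun u => K u ^ 2)
    {p : Vec d → ℝ} (hmeas : Measurable p) {h : Vec d} (hh : ∀ i, 0 < h i) (t : Vec d) :
    sigmaSq d n K p h t
      = (n : ℝ)⁻¹ * ((∏ i, h i)⁻¹ * ∫ u, K u ^ 2 * p (fun i => t i - h i * u i)) := by
  have hprod : 0 < ∏ i, h i := Finset.prod_pos fun i _ => hh i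
  unfold sigmaSq scaledKernel
  simp only [mul_pow]
  rw [integral_eq_prod_mul_integral_sub_mul hh t]
  · congr 1
    have hcancel : ∀ (u : Vec d) i, (t i - (t i - h i * u i)) / h i = u i := fun u i => by
      rw [sub_sub_cancel, mul_div_cancel_left₀ _ (hh i).ne']
    simp only [hcancel, mul_assoc]
    rw [integral_const_mul]
    field_simp
  · exact ((hK.measurable.comp (measurable_pi_lambda _ fun i =>
      (measurable_const.sub (measurable_pi_apply i)).div_const _)).const_mul _).mul hmeas

/-- Bandwidths below the threshold `c₈ p(t)^{1/β_i}` make each Hölder term small. -/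
lemma holder_term_le_of_le_c8const {d : ℕ} (hd : 1 ≤ d) {K : Vec d → ℝ} {β : Vec d} {L : ℝ}
    (hL : 0 < L) {i : Fin d} (hβ : 0 < β i) {b x : ℝ} (hx : 0 ≤ x) (hb : 0 < b)
    (hle : b ≤ c8const d K β L * x ^ (β i)⁻¹) :
    L * b ^ β i * (∫ u : Vec d, |u i| ^ β i * K u ^ 2) ≤ K2sq d K * x / (2 * d) := by
  have hd0 : (0 : ℝ) < d := by exact_mod_cast hd
  set I := ∫ u : Vec d, |u i| ^ β i * K u ^ 2 with hI
  have hI0 : 0 ≤ I := integral_nonneg fun u => by positivity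
  have hK0 : 0 ≤ K2sq d K := integral_nonneg fun u => by positivity
  set A := 2 * d * L * I / K2sq d K with hA
  have hA0 : 0 ≤ A := by positivity
  have hc8 : c8const d K β L ≤ A ^ (-(β i)⁻¹) :=
    ciInf_le (Set.finite_range _).bddBelow i
  have hbA : b ≤ A ^ (-(β i)⁻¹) * x ^ (β i)⁻¹ :=
    hle.trans (mul_le_mul_of_nonneg_right hc8 (Real.rpow_nonneg hx _))
  have hA1 : A ≠ 0 := fun h0 => by
    rw [h0, Real.zero_rpow (by simpa using hβ.ne'), zero_mul] at hbA
    exact hbA.not_gt hb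
  have hK1 : K2sq d K ≠ 0 := fun h0 => hA1 (by rw [hA, h0, div_zero])
  have hI1 : I ≠ 0 := fun h0 => hA1 (by rw [hA, h0, mul_zero, zero_div])
  have hpow : b ^ β i ≤ A⁻¹ * x := by
    refine (Real.rpow_le_rpow hb.le hbA hβ.le).trans_eq ?_
    rw [Real.mul_rpow (Real.rpow_nonneg hA0 _) (Real.rpow_nonneg hx _), Real.rpow_neg hA0,
      Real.inv_rpow (Real.rpow_nonneg hA0 _), Real.rpow_inv_rpow hA0 hβ.ne',
      Real.rpow_inv_rpow hx hβ.ne']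
  calc L * b ^ β i * I ≤ L * (A⁻¹ * x) * I := by gcongr
    _ = K2sq d K * x / (2 * d) := by rw [hA]; field_simp

/-- Lemma 5.1(i), variance sandwich.
For `p ∈ 𝒫_d(β,L)` with `0 < β_i ≤ 2` and any bandwidth with
`0 < h_i ≤ c₈(β,L) p(t)^{1/β_i}`:
`(1/2)‖K‖₂² p(t)/(n ∏ h_i) ≤ n⁻¹((K_h)² ∗ p)(t) ≤ (3/2)‖K‖₂² p(t)/(n ∏ h_i)`. -/
theorem statement7 (d : ℕ) (hd : 1 ≤ d) (K : Vec d → ℝ) (hK : IsProductKernel d K)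
    (β : Vec d) (hβ : ∀ i, 0 < β i ∧ β i ≤ 2) (L : ℝ) (hL : 0 < L)
    (p : Vec d → ℝ) (hp : Pclass d β L p) (t : Vec d) (n : ℕ) (h : Vec d)
    (hh : ∀ i, 0 < h i ∧ h i ≤ c8const d K β L * p t ^ (β i)⁻¹) :
    (1 / 2) * K2sq d K * p t / (n * ∏ i, h i) ≤ sigmaSq d n K p h t ∧
      sigmaSq d n K p h t ≤ (3 / 2) * K2sq d K * p t / (n * ∏ i, h i) := by
  have hpos : ∀ i, 0 < h i := fun i => (hh i).1
  have hw := hK.isEvenCubeWeight_sq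
  obtain ⟨⟨hmeas, hnonneg, -⟩, hHolder⟩ := hp
  have hprod : 0 < ∏ i, h i := Finset.prod_pos fun i _ => hpos i
  have hd0 : (0 : ℝ) < d := by exact_mod_cast hd
  have hbias := abs_integral_weight_partialShift_sub_le hw hHolder hmeas hnonneg hL hβ t h hpos
    Finset.univ
  have hsum : ∑ i, L * h i ^ β i * (∫ u : Vec d, |u i| ^ β i * K u ^ 2)
      ≤ 1 / 2 * K2sq d K * p t := by
    refine (Finset.sum_le_sum fun i _ =>
      holder_term_le_of_le_c8const hd hL (hβ i).1 (hnonneg t) (hpos i) (hh i).2).trans_eq ?_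
    rw [Finset.sum_const, Finset.card_univ, Fintype.card_fin, nsmul_eq_mul]
    field_simp
  have habs := abs_le.1 (hbias.trans hsum)
  simp only [partialShift_univ] at habs
  change _ ≤ _ - K2sq d K * p t ∧ _ - K2sq d K * p t ≤ _ at habs
  have hscale : ∀ a : ℝ, a / (n * ∏ i, h i) = (n : ℝ)⁻¹ * ((∏ i, h i)⁻¹ * a) := fun a => by
    rw [div_eq_mul_inv, mul_inv]; ring
  rw [sigmaSq_eq hw hmeas hpos, hscale, hscale]
  constructor <;> gcongr <;> linarith [habs.1, habs.2]
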